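/- arXiv:2202.13111 — 6 statements merged into one kernel-verified Lean document; each statement's English description precedes it below -/
import Mathlib

section
/- Let Y be a nonempty finite type and let S : ℝ≥0 → Matrix Y Y ℝ satisfy: every S t has nonnegative entries, S 0 is the identity matrix, S (t + s) = (S t) * (S s) for all t, s ≥ 0, and there are constants M ≥ 1 and ξ > 0 with ‖S t‖ ≤ M · exp(−ξ t) for all t ≥ 0 (operator norm induced by the supremum norm). Define, for f : Y → ℝ, ‖f‖_* := ⨆_{t ≥ 0} ‖exp(ξ t) • ((S t).mulVec |f|)‖, where |f| is the pointwise absolute value of f and ‖·‖ is the supremum norm. Then ‖·‖_* is a norm on Y → ℝ: it takes finite values, satisfies the triangle inequality ‖f + g‖_* ≤ ‖f‖_* + ‖g‖_*, is absolutely homogeneous (‖c • f‖_* = |c| · ‖f‖_*), and ‖f‖_* = 0 implies f = 0. -/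
attribute [local instance]
  Matrix.linftyOpNormedAddCommGroup Matrix.linftyOpNormedRing Matrix.linftyOpNormedAlgebra

/-- The Feller re-norming `‖f‖_* = ⨆ t ≥ 0, ‖exp (ξ t) • (S t).mulVec |f|‖` associated with a
semigroup `S` of nonnegative matrices, where `‖·‖` is the supremum norm. -/
noncomputable def starNorm {Y : Type*} [Fintype Y] (ξ : ℝ) (S : NNReal → Matrix Y Y ℝ)
    (f : Y → ℝ) : ℝ :=
  ⨆ t : NNReal, ‖Real.exp (ξ * t) • (S t).mulVec (fun y => |f y|)‖

/-- For a uniformly exponentially stable semigroup of nonnegative matrices, the Feller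
re-norming `‖·‖_*` is a genuine (finite-valued) norm on `Y → ℝ`. -/
theorem starNorm_is_norm {Y : Type*} [Fintype Y] [Nonempty Y] [DecidableEq Y]
    (S : NNReal → Matrix Y Y ℝ)
    (hpos : ∀ t, ∀ x y, 0 ≤ S t x y)
    (hid : S 0 = 1)
    (hsem : ∀ t s, S (t + s) = S t * S s)
    (M ξ : ℝ) (hM : 1 ≤ M) (hξ : 0 < ξ)
    (hdecay : ∀ t : NNReal, ‖S t‖ ≤ M * Real.exp (-ξ * t)) :
    (∀ f : Y → ℝ,
        BddAbove (Set.range fun t : NNReal =>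
          ‖Real.exp (ξ * t) • (S t).mulVec (fun y => |f y|)‖)) ∧
    (∀ f g : Y → ℝ, starNorm ξ S (f + g) ≤ starNorm ξ S f + starNorm ξ S g) ∧
    (∀ (c : ℝ) (f : Y → ℝ), starNorm ξ S (c • f) = |c| * starNorm ξ S f) ∧
    (∀ f : Y → ℝ, starNorm ξ S f = 0 → f = 0) := by
  have hb : ∀ f : Y → ℝ, BddAbove (Set.range fun t : NNReal =>
      ‖Real.exp (ξ * t) • (S t).mulVec (fun y => |f y|)‖) := by
    intro f
    refine ⟨M * ‖(fun y => |f y|)‖, ?_⟩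
    rintro _ ⟨t, rfl⟩
    show ‖Real.exp (ξ * t) • (S t).mulVec (fun y => |f y|)‖ ≤ _
    rw [norm_smul, Real.norm_eq_abs, abs_of_pos (Real.exp_pos _)]
    have h1 := Matrix.linfty_opNorm_mulVec (S t) (fun y => |f y|)
    have h2 := mul_le_mul_of_nonneg_right (hdecay t) (norm_nonneg (fun y => |f y|))
    have h3 := mul_le_mul_of_nonneg_left (h1.trans h2) (Real.exp_pos (ξ * t)).le
    refine h3.trans (le_of_eq ?_)
    have h4 : Real.exp (ξ * t) * Real.exp (-ξ * t) = 1 := by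
      rw [← Real.exp_add]; simp
    linear_combination (M * ‖(fun y => |f y|)‖) * h4
  refine ⟨hb, ?_, ?_, ?_⟩
  · intro f g
    unfold starNorm
    refine ciSup_le fun t => ?_
    refine le_trans ?_ (add_le_add (le_ciSup (hb f) t) (le_ciSup (hb g) t))
    refine le_trans ?_ (norm_add_le _ _)
    rw [← smul_add, ← Matrix.mulVec_add, norm_smul, norm_smul]
    refine mul_le_mul_of_nonneg_left ?_ (norm_nonneg _)
    refine (pi_norm_le_iff_of_nonneg (norm_nonneg _)).2 fun x => ?_
    refine le_trans ?_ (norm_le_pi_norm _ x)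
    rw [Real.norm_eq_abs, Real.norm_eq_abs]
    refine abs_le_abs_of_nonneg ?_ ?_
    · exact Finset.sum_nonneg fun y _ => mul_nonneg (hpos t x y) (abs_nonneg _)
    · exact Finset.sum_le_sum fun y _ =>
        mul_le_mul_of_nonneg_left (abs_add_le (f y) (g y)) (hpos t x y)
  · intro c f
    unfold starNorm
    rw [Real.mul_iSup_of_nonneg (abs_nonneg c)]
    refine iSup_congr fun t => ?_
    have h : (fun y => |(c • f) y|) = |c| • (fun y => |f y|) := by
      funext y; simp [abs_mul]
    rw [h, Matrix.mulVec_smul, smul_comm, norm_smul |c|]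
    simp
  · intro f hf
    have h := le_ciSup (hb f) 0
    unfold starNorm at hf
    rw [hf] at h
    simp only [hid, Matrix.one_mulVec, NNReal.coe_zero, mul_zero, Real.exp_zero, one_smul] at h
    have h0 := norm_le_zero_iff.1 h
    funext y
    have := congrFun h0 y
    simpa using this
end

section
/- Let Y be a nonempty finite type and let S : ℝ≥0 → Matrix Y Y ℝ satisfy: every S t has nonnegative entries, S 0 is the identity matrix, S (t + s) = (S t) * (S s) for all t, s ≥ 0, and there are constants M ≥ 1 and ξ > 0 with ‖S t‖ ≤ M · exp(−ξ t) for all t ≥ 0 (operator norm induced by the supremum norm). With ‖f‖_* := ⨆_{t ≥ 0} ‖exp(ξ t) • ((S t).mulVec |f|)‖, the semigroup is quasicontractive in this norm: ‖(S t).mulVec f‖_* ≤ exp(−ξ t) · ‖f‖_* for every t ≥ 0 and every f : Y → ℝ. -/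
attribute [local instance]
  Matrix.linftyOpNormedAddCommGroup Matrix.linftyOpNormedRing Matrix.linftyOpNormedAlgebra

/-- For a uniformly exponentially stable semigroup of nonnegative matrices, the semigroup is
quasicontractive in the Feller re-norming: `‖(S t).mulVec f‖_* ≤ exp (-ξ t) * ‖f‖_*`. -/
theorem starNorm_quasicontractive {Y : Type*} [Fintype Y] [Nonempty Y] [DecidableEq Y]
    (S : NNReal → Matrix Y Y ℝ)
    (hpos : ∀ t, ∀ x y, 0 ≤ S t x y)
    (hid : S 0 = 1)
    (hsem : ∀ t s, S (t + s) = S t * S s)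
    (M ξ : ℝ) (hM : 1 ≤ M) (hξ : 0 < ξ)
    (hdecay : ∀ t : NNReal, ‖S t‖ ≤ M * Real.exp (-ξ * t)) :
    ∀ (t : NNReal) (f : Y → ℝ),
      starNorm ξ S ((S t).mulVec f) ≤ Real.exp (-ξ * t) * starNorm ξ S f := by
  intro t f
  have hbdd : BddAbove (Set.range fun r : NNReal =>
      ‖Real.exp (ξ * r) • (S r).mulVec (fun y => |f y|)‖) := by
    refine ⟨M * ‖fun y => |f y|‖, ?_⟩
    rintro _ ⟨r, rfl⟩
    show ‖Real.exp (ξ * r) • (S r).mulVec (fun y => |f y|)‖ ≤ _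
    rw [norm_smul, Real.norm_of_nonneg (Real.exp_pos _).le]
    have h1 := Matrix.linfty_opNorm_mulVec (S r) (fun y => |f y|)
    have h2 : ‖S r‖ * ‖fun y => |f y|‖ ≤ M * Real.exp (-ξ * r) * ‖fun y => |f y|‖ :=
      mul_le_mul_of_nonneg_right (hdecay r) (norm_nonneg _)
    have h3 : Real.exp (ξ * r) * Real.exp (-ξ * r) = 1 := by
      rw [← Real.exp_add]; simp
    calc _ ≤ Real.exp (ξ * r) * (M * Real.exp (-ξ * r) * ‖fun y => |f y|‖) :=
          mul_le_mul_of_nonneg_left (h1.trans h2) (Real.exp_pos _).le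
      _ = (Real.exp (ξ * r) * Real.exp (-ξ * r)) * (M * ‖fun y => |f y|‖) := by ring
      _ = _ := by rw [h3, one_mul]
  have habs : ∀ y, |(S t).mulVec f y| ≤ (S t).mulVec (fun y => |f y|) y := by
    intro y
    simp only [Matrix.mulVec, dotProduct]
    refine (Finset.abs_sum_le_sum_abs _ _).trans (Finset.sum_le_sum fun z _ => ?_)
    rw [abs_mul, abs_of_nonneg (hpos t y z)]
  refine ciSup_le fun s => ?_
  have hle : ‖(S s).mulVec (fun y => |(S t).mulVec f y|)‖
      ≤ ‖(S (s + t)).mulVec (fun y => |f y|)‖ := by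
    refine (pi_norm_le_iff_of_nonneg (norm_nonneg _)).2 fun x => ?_
    have h0 : 0 ≤ (S s).mulVec (fun y => |(S t).mulVec f y|) x :=
      Finset.sum_nonneg fun z _ => mul_nonneg (hpos s x z) (abs_nonneg _)
    rw [Real.norm_of_nonneg h0]
    refine le_trans ?_ ((Real.le_norm_self _).trans (norm_le_pi_norm ((S (s + t)).mulVec (fun y => |f y|)) x))
    rw [hsem, ← Matrix.mulVec_mulVec]
    exact Finset.sum_le_sum fun z _ => mul_le_mul_of_nonneg_left (habs z) (hpos s x z)
  have hsup := le_ciSup hbdd (s + t)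
  have hexp : Real.exp (ξ * s) = Real.exp (-ξ * t) * Real.exp (ξ * (s + t : NNReal)) := by
    rw [← Real.exp_add]; congr 1; push_cast; ring
  calc _ = Real.exp (ξ * s) * ‖(S s).mulVec (fun y => |(S t).mulVec f y|)‖ := by
        rw [norm_smul, Real.norm_of_nonneg (Real.exp_pos _).le]
    _ ≤ Real.exp (ξ * s) * ‖(S (s + t)).mulVec (fun y => |f y|)‖ :=
        mul_le_mul_of_nonneg_left hle (Real.exp_pos _).le
    _ = Real.exp (-ξ * t) *
        ‖Real.exp (ξ * (s + t : NNReal)) • (S (s + t)).mulVec (fun y => |f y|)‖ := by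
        rw [norm_smul, Real.norm_of_nonneg (Real.exp_pos _).le, hexp, mul_assoc]
    _ ≤ _ := mul_le_mul_of_nonneg_left hsup (Real.exp_pos _).le
end

section
/- Let Y be a nonempty finite type, T : Matrix Y Y ℝ, and let ‖·‖_* be a norm on Y → ℝ such that ‖f‖ ≤ ‖f‖_* ≤ c · ‖f‖ for all f : Y → ℝ, where ‖·‖ is the supremum norm and c ≥ 1. Let ξ > 0 and Δ > 0 with Δ · ξ < 1, and suppose the operator norm of T with respect to ‖·‖_* is at most exp(−ξ Δ). Then the matrix 1 − T is invertible, and the operator norm of (1 − T)⁻¹ induced by the supremum norm is strictly less than (2 c / ξ) / Δ. -/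
attribute [local instance]
  Matrix.linftyOpNormedAddCommGroup Matrix.linftyOpNormedRing Matrix.linftyOpNormedAlgebra

/-- If a matrix `T` has operator norm at most `exp (-ξ Δ)` with respect to a norm `N`
equivalent to the supremum norm (with `‖f‖ ≤ N f ≤ c ‖f‖`), and `Δ ξ < 1`, then `1 - T` is
invertible and `‖(1 - T)⁻¹‖ < (2 c / ξ) / Δ` in the operator norm induced by the supremum
norm. -/
theorem resolvent_norm_bound {Y : Type*} [Fintype Y] [Nonempty Y] [DecidableEq Y]
    (T : Matrix Y Y ℝ) (N : (Y → ℝ) → ℝ)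
    (hNadd : ∀ f g : Y → ℝ, N (f + g) ≤ N f + N g)
    (hNsmul : ∀ (a : ℝ) (f : Y → ℝ), N (a • f) = |a| * N f)
    (c : ℝ) (hc : 1 ≤ c)
    (hequiv : ∀ f : Y → ℝ, ‖f‖ ≤ N f ∧ N f ≤ c * ‖f‖)
    (ξ Δ : ℝ) (hξ : 0 < ξ) (hΔ : 0 < Δ) (hΔξ : Δ * ξ < 1)
    (hT : ∀ f : Y → ℝ, N (T.mulVec f) ≤ Real.exp (-(ξ * Δ)) * N f) :
    IsUnit (1 - T) ∧ ‖(1 - T)⁻¹‖ < (2 * c / ξ) / Δ := by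
  have hx : 0 < ξ * Δ := mul_pos hξ hΔ
  have hx1 : ξ * Δ < 1 := by rwa [mul_comm]
  have hexp : Real.exp (-(ξ * Δ)) < 1 - ξ * Δ / 2 := by
    have h1 : ξ * Δ + 1 ≤ Real.exp (ξ * Δ) := Real.add_one_le_exp _
    rw [Real.exp_neg, inv_lt_iff_one_lt_mul₀ (Real.exp_pos _)]
    nlinarith
  set e := Real.exp (-(ξ * Δ)) with he
  have he1 : 0 < 1 - e := by linarith
  have key : ∀ f : Y → ℝ, ‖f‖ ≤ c / (1 - e) * ‖(1 - T).mulVec f‖ := by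
    intro f
    have h1 := hNadd ((1 - T).mulVec f) (T.mulVec f)
    have h2 : (1 - T).mulVec f + T.mulVec f = f := by
      rw [Matrix.sub_mulVec, Matrix.one_mulVec, sub_add_cancel]
    rw [h2] at h1
    have h3 := hT f
    have h4 := (hequiv f).1
    have h5 := (hequiv ((1 - T).mulVec f)).2
    rw [div_mul_eq_mul_div, le_div_iff₀ he1]
    nlinarith
  have hU : IsUnit (1 - T) := by
    rw [← Matrix.mulVec_injective_iff_isUnit]
    intro f g hfg
    have h := key (f - g)
    have h0 : (1 - T).mulVec (f - g) = 0 := by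
      rw [Matrix.mulVec_sub]
      exact sub_eq_zero.mpr hfg
    rw [h0, norm_zero, mul_zero] at h
    exact sub_eq_zero.mp (norm_le_zero_iff.mp h)
  refine ⟨hU, ?_⟩
  have hle : ‖(1 - T)⁻¹‖ ≤ c / (1 - e) := by
    rw [Matrix.linfty_opNorm_eq_opNorm]
    refine ContinuousLinearMap.opNorm_le_bound _ (by positivity) ?_
    intro g
    have h := key ((1 - T)⁻¹.mulVec g)
    rw [Matrix.mulVec_mulVec, Matrix.mul_nonsing_inv _ ((Matrix.isUnit_iff_isUnit_det _).mp hU),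
      Matrix.one_mulVec] at h
    exact h
  refine hle.trans_lt ?_
  rw [div_div, div_lt_div_iff₀ he1 hx]
  nlinarith
end

section
/- Let T̲ : (X → ℝ) → (X → ℝ) be a lower transition operator, i.e. for all f, g : X → ℝ, all λ ≥ 0, and all x ∈ X: (i) (T̲ f)(x) ≥ min_{y ∈ X} f(y); (ii) T̲ f + T̲ g ≤ T̲ (f + g) pointwise; (iii) T̲ (λ • f) = λ • T̲ f. Then for every f : X → ℝ there exists a transition matrix T such that T.mulVec g ≥ T̲ g pointwise for every g : X → ℝ, and T.mulVec f = T̲ f. -/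
/-- A transition matrix: nonnegative entries and every row sums to one. -/
def IsTransitionMatrix {X : Type*} [Fintype X] (T : Matrix X X ℝ) : Prop :=
  (∀ x y, 0 ≤ T x y) ∧ ∀ x, ∑ y, T x y = 1

theorem exists_row_aux {X : Type*} (M : (X → ℝ) → ℝ)
    (h2 : ∀ f g : X → ℝ, M f + M g ≤ M (f + g))
    (h3 : ∀ (lam : ℝ), 0 ≤ lam → ∀ f : X → ℝ, M (lam • f) = lam * M f) (f : X → ℝ) :
    ∃ l : (X → ℝ) →ₗ[ℝ] ℝ, (∀ g, M g ≤ l g) ∧ l f = M f := by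
  have h0 : M 0 = 0 := by simpa using h3 0 le_rfl 0
  have H : ∀ c : ℝ, c • f = 0 → c • M f = 0 := by
    intro c hc
    rcases smul_eq_zero.1 hc with h | h
    · simp [h]
    · simp [h, h0]
  obtain ⟨l, hl, hN⟩ := exists_extension_of_le_sublinear
    (LinearPMap.mkSpanSingleton' f (M f) H) (fun g => - M (-g)) (by
      intro c hc x
      have := h3 c hc.le (-x)
      simp only [smul_neg] at this
      simp only [this]
      ring) (by
      intro x y
      have := h2 (-x) (-y)
      rw [show -(x + y) = -x + -y by abel]
      linarith) (by
      rintro ⟨x, hx⟩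
      obtain ⟨c, rfl⟩ := Submodule.mem_span_singleton.1 hx
      rw [LinearPMap.mkSpanSingleton'_apply]
      simp only [smul_eq_mul, RingHom.id_apply]
      rcases le_total 0 c with hc | hc
      · have a := h2 (c • f) (-(c • f))
        rw [add_neg_cancel, h0, h3 c hc] at a
        linarith
      · have a := h3 (-c) (by linarith) f
        rw [neg_smul] at a
        rw [a]
        linarith)
  refine ⟨l, fun g => ?_, ?_⟩
  · have := hN (-g)
    simp only [map_neg, neg_neg] at this
    linarith
  · have hm : f ∈ Submodule.span ℝ {f} := Submodule.mem_span_singleton_self f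
    exact (hl ⟨f, hm⟩).trans (LinearPMap.mkSpanSingleton'_apply_self f (M f) H hm)

/-- For a lower transition operator `T̲`, every `f` admits a dominating transition matrix `T`
(`T.mulVec g ≥ T̲ g` for all `g`) that attains `T̲` at `f`: `T.mulVec f = T̲ f`. -/
theorem lowerTransitionOperator_attained {X : Type*} [Fintype X] [Nontrivial X]
    (L : (X → ℝ) → (X → ℝ))
    (h1 : ∀ (f : X → ℝ) (x : X), (⨅ y, f y) ≤ L f x)
    (h2 : ∀ f g : X → ℝ, L f + L g ≤ L (f + g))
    (h3 : ∀ (lam : ℝ), 0 ≤ lam → ∀ f : X → ℝ, L (lam • f) = lam • L f) :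
    ∀ f : X → ℝ, ∃ T : Matrix X X ℝ,
      IsTransitionMatrix T ∧ (∀ g : X → ℝ, L g ≤ T.mulVec g) ∧ T.mulVec f = L f := by
  intro f
  classical
  have key := fun x => exists_row_aux (fun g => L g x) (fun f g => h2 f g x)
    (fun c hc g => by simp [h3 c hc g]) f
  choose l hl hf using key
  have hmul : ∀ x g, ∑ y, l x (Pi.single y 1) * g y = l x g := by
    intro x g
    conv_rhs => rw [pi_eq_sum_univ' g, map_sum]
    refine Finset.sum_congr rfl fun y _ => ?_
    rw [map_smul, smul_eq_mul, mul_comm]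
  refine ⟨fun x y => l x (Pi.single y 1), ⟨fun x y => ?_, fun x => ?_⟩, fun g x => ?_, ?_⟩
  · refine le_trans ?_ ((h1 _ x).trans (hl x _))
    refine le_ciInf fun z => ?_
    rw [Pi.single_apply]
    split_ifs <;> norm_num
  · have e := hmul x (fun _ => 1)
    simp only [mul_one] at e
    rw [e]
    have a := (h1 (fun _ => 1) x).trans (hl x _)
    have b := (h1 (-(fun _ => (1:ℝ))) x).trans (hl x _)
    rw [map_neg] at b
    simp only [Pi.neg_apply, ciInf_const] at a b
    linarith
  · exact (hl x g).trans_eq (hmul x g).symm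
  · funext x
    exact (hmul x f).trans (hf x)
end

section
/- Let Q̲ : (X → ℝ) → (X → ℝ) be a lower rate operator, i.e. for all f, g : X → ℝ, all λ ≥ 0, all μ ∈ ℝ, and all x, y ∈ X with y ≠ x: (i) Q̲ (μ • 1)(x) = 0, where 1 is the constant function equal to 1; (ii) Q̲ (𝟙_y)(x) ≥ 0, where 𝟙_y is the indicator function of {y}; (iii) Q̲ f + Q̲ g ≤ Q̲ (f + g) pointwise; (iv) Q̲ (λ • f) = λ • Q̲ f. Then for every f : X → ℝ there exists a rate matrix Q such that Q.mulVec g ≥ Q̲ g pointwise for every g : X → ℝ, and Q.mulVec f = Q̲ f. -/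
/-- A rate matrix: off-diagonal entries nonnegative and every row sums to zero. -/
def IsRateMatrix {X : Type*} [Fintype X] (Q : Matrix X X ℝ) : Prop :=
  (∀ x y, x ≠ y → 0 ≤ Q x y) ∧ ∀ x, ∑ y, Q x y = 0

theorem aux_hb {E : Type*} [AddCommGroup E] [Module ℝ E] (N : E → ℝ)
    (hadd : ∀ f g, N f + N g ≤ N (f + g)) (hs : ∀ c : ℝ, 0 ≤ c → ∀ f, N (c • f) = c * N f)
    (f : E) : ∃ φ : E →ₗ[ℝ] ℝ, (∀ g, N g ≤ φ g) ∧ φ f = N f := by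
  have N0 : N 0 = 0 := by simpa using hs 0 le_rfl 0
  have H : ∀ c : ℝ, c • f = 0 → c • (-N f) = 0 := by
    intro c hc
    rcases smul_eq_zero.mp hc with h | h
    · simp [h]
    · simp [h, N0]
  obtain ⟨ψ, hψ, hle⟩ := exists_extension_of_le_sublinear
    (LinearPMap.mkSpanSingleton' f (-N f) H) (fun g => -N g)
    (fun c hc x => by simp [hs c hc.le]) (fun x y => by linarith [hadd x y]) (by
      rintro ⟨z, hz⟩
      obtain ⟨c, rfl⟩ := Submodule.mem_span_singleton.mp hz
      rw [LinearPMap.mkSpanSingleton'_apply]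
      simp only [smul_eq_mul, RingHom.id_apply]
      rcases le_total 0 c with hc | hc
      · rw [hs c hc]; linarith
      · have a := hadd (c • f) ((-c) • f)
        rw [hs (-c) (by linarith) f, neg_smul, add_neg_cancel, N0] at a
        linarith)
  have hf : f ∈ (LinearPMap.mkSpanSingleton' (σ := RingHom.id ℝ) f (-N f) H).domain :=
    Submodule.mem_span_singleton_self f
  have e := hψ ⟨f, hf⟩
  rw [LinearPMap.mkSpanSingleton'_apply_self] at e
  refine ⟨-ψ, fun g => ?_, ?_⟩
  · have := hle g
    simp only [LinearMap.neg_apply]; linarith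
  · simp only [LinearMap.neg_apply]
    have e' : ψ f = -N f := e
    linarith

/-- For a lower rate operator `Q̲`, every `f` admits a dominating rate matrix `Q`
(`Q.mulVec g ≥ Q̲ g` for all `g`) that attains `Q̲` at `f`: `Q.mulVec f = Q̲ f`. -/
theorem lowerRateOperator_attained {X : Type*} [Fintype X] [DecidableEq X] [Nontrivial X]
    (L : (X → ℝ) → (X → ℝ))
    (h1 : ∀ (μ : ℝ) (x : X), L (fun _ => μ) x = 0)
    (h2 : ∀ x y : X, y ≠ x → 0 ≤ L (fun z => if z = y then 1 else 0) x)
    (h3 : ∀ f g : X → ℝ, L f + L g ≤ L (f + g))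
    (h4 : ∀ (lam : ℝ), 0 ≤ lam → ∀ f : X → ℝ, L (lam • f) = lam • L f) :
    ∀ f : X → ℝ, ∃ Q : Matrix X X ℝ,
      IsRateMatrix Q ∧ (∀ g : X → ℝ, L g ≤ Q.mulVec g) ∧ Q.mulVec f = L f := by
  intro f
  choose φ hφ hf using fun x => aux_hb (fun g => L g x) (fun f g => h3 f g x)
    (fun c hc f => by simp [h4 c hc f]) f
  have key : ∀ g, (LinearMap.toMatrix' (LinearMap.pi φ)).mulVec g = fun x => φ x g := by
    intro g
    rw [LinearMap.toMatrix'_mulVec]; rfl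
  refine ⟨LinearMap.toMatrix' (LinearMap.pi φ), ⟨fun x y hxy => ?_, fun x => ?_⟩, fun g x => ?_, ?_⟩
  · have a := (h2 x y hxy.symm).trans (hφ x _)
    have b := congrFun (key (fun z => if z = y then 1 else 0)) x
    rw [← b] at a
    simpa [Matrix.mulVec, dotProduct] using a
  · have a := hφ x (fun _ => 1)
    have b := hφ x (fun _ => -1)
    have a' := congrFun (key (fun _ => 1)) x
    have b' := congrFun (key (fun _ => -1)) x
    simp only [h1] at a b
    rw [← a'] at a
    rw [← b'] at b
    simp only [Matrix.mulVec, dotProduct, mul_one, mul_neg, Finset.sum_neg_distrib] at a b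
    linarith
  · rw [key]; exact hφ x g
  · rw [key]; funext x; exact hf x
end

section
/- Let Q̲ : (X → ℝ) → (X → ℝ) be a lower rate operator, i.e. for all f, g : X → ℝ, all λ ≥ 0, all μ ∈ ℝ, and all x, y ∈ X with y ≠ x: (i) Q̲ (μ • 1)(x) = 0; (ii) Q̲ (𝟙_y)(x) ≥ 0; (iii) Q̲ f + Q̲ g ≤ Q̲ (f + g) pointwise; (iv) Q̲ (λ • f) = λ • Q̲ f. Then the dominating set { Q : Matrix X X ℝ | Q is a rate matrix and Q.mulVec g ≥ Q̲ g pointwise for every g : X → ℝ } is nonempty, convex, and compact in the finite-dimensional space of real X × X matrices. -/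
/-- For a lower rate operator `Q̲`, the set of dominating rate matrices is nonempty, convex,
and compact. -/
theorem dominating_rateMatrices_nonempty_convex_compact
    {X : Type*} [Fintype X] [DecidableEq X] [Nontrivial X]
    (L : (X → ℝ) → (X → ℝ))
    (h1 : ∀ (μ : ℝ) (x : X), L (fun _ => μ) x = 0)
    (h2 : ∀ x y : X, y ≠ x → 0 ≤ L (fun z => if z = y then 1 else 0) x)
    (h3 : ∀ f g : X → ℝ, L f + L g ≤ L (f + g))
    (h4 : ∀ (lam : ℝ), 0 ≤ lam → ∀ f : X → ℝ, L (lam • f) = lam • L f) :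
    {Q : Matrix X X ℝ | IsRateMatrix Q ∧ ∀ g : X → ℝ, L g ≤ Q.mulVec g}.Nonempty ∧
    Convex ℝ {Q : Matrix X X ℝ | IsRateMatrix Q ∧ ∀ g : X → ℝ, L g ≤ Q.mulVec g} ∧
    IsCompact {Q : Matrix X X ℝ | IsRateMatrix Q ∧ ∀ g : X → ℝ, L g ≤ Q.mulVec g} := by
  have key : ∀ x : X, ∃ g : (X → ℝ) →ₗ[ℝ] ℝ, ∀ f, L f x ≤ g f := by
    intro x
    obtain ⟨g, -, hg⟩ := exists_extension_of_le_sublinear (⊥ : (X → ℝ) →ₗ.[ℝ] ℝ)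
      (fun f => - L (-f) x)
      (by
        intro c hc f
        have := congrFun (h4 c hc.le (-f)) x
        simp only [Pi.smul_apply, smul_eq_mul, smul_neg] at this
        simp only [this]; ring)
      (by
        intro f g
        have := h3 (-f) (-g) x
        simp only [Pi.add_apply] at this
        rw [show -(f + g) = -f + -g by ring]
        linarith)
      (by
        rintro ⟨f, hf⟩
        have hf0 : f = 0 := (Submodule.mem_bot ℝ).1 hf
        subst hf0
        have h := h1 0 x
        have e : (-(0 : X → ℝ)) = fun _ => (0 : ℝ) := by ext; simp
        have e2 : (⟨0, hf⟩ : (⊥ : (X → ℝ) →ₗ.[ℝ] ℝ).domain) = 0 := rfl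
        rw [e2, LinearPMap.map_zero]
        simp only [ZeroMemClass.coe_zero, e, h]
        simp)
    refine ⟨g, fun f => ?_⟩
    have := hg (-f)
    simp only [neg_neg, map_neg] at this
    linarith
  refine ⟨?_, ?_, ?_⟩
  · choose G hG using key
    have hmul : ∀ (x : X) (f : X → ℝ),
        ∑ y, G x (fun z => if z = y then 1 else 0) * f y = G x f := by
      intro x f
      have e : f = ∑ y, f y • (fun z => if z = y then (1 : ℝ) else 0) := by
        ext z; simp [Finset.sum_apply]
      conv_rhs => rw [e]
      simp [map_sum, mul_comm]
    refine ⟨fun x y => G x (fun z => if z = y then 1 else 0), ⟨?_, ?_⟩, ?_⟩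
    · intro x y hxy
      exact (h2 x y hxy.symm).trans (hG x _)
    · intro x
      have h := hmul x (fun _ => 1)
      simp only [mul_one] at h
      rw [h]
      have a := hG x (fun _ => 1)
      have b := hG x (fun _ => -1)
      rw [h1] at a b
      have e : (fun _ : X => (-1 : ℝ)) = -(fun _ => 1) := by ext; simp
      rw [e, map_neg] at b
      linarith
    · intro g x
      exact (hG x g).trans (hmul x g).ge
  · rintro P ⟨⟨p1, p2⟩, p3⟩ R ⟨⟨r1, r2⟩, r3⟩ a b ha hb hab
    refine ⟨⟨?_, ?_⟩, ?_⟩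
    · intro x y hxy
      have := p1 x y hxy
      have := r1 x y hxy
      simp only [Matrix.add_apply, Matrix.smul_apply, smul_eq_mul]
      positivity
    · intro x
      simp [Finset.sum_add_distrib, ← Finset.mul_sum, p2, r2]
    · intro g x
      have h := mul_le_mul_of_nonneg_left (p3 g x) ha
      have h' := mul_le_mul_of_nonneg_left (r3 g x) hb
      simp only [Matrix.add_mulVec, Matrix.smul_mulVec, Pi.add_apply, Pi.smul_apply, smul_eq_mul]
      have e : L g x = a * L g x + b * L g x := by rw [← add_mul, hab, one_mul]
      linarith
  · have hK : IsCompact (Set.pi Set.univ fun x : X => Set.pi Set.univ fun y : X =>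
        Set.Icc (L (Pi.single y 1) x) (-L (-(Pi.single y 1)) x)) :=
      isCompact_univ_pi fun x => isCompact_univ_pi fun y => isCompact_Icc
    refine hK.of_isClosed_subset (X := Matrix X X ℝ) ?_ ?_
    · have hent : ∀ x y, Continuous fun Q : Matrix X X ℝ => Q x y := fun x y =>
        continuous_id.matrix_elem x y
      have e : {Q : Matrix X X ℝ | IsRateMatrix Q ∧ ∀ g : X → ℝ, L g ≤ Q.mulVec g} =
          ((⋂ x, ⋂ y, ⋂ (_ : x ≠ y), {Q : Matrix X X ℝ | 0 ≤ Q x y}) ∩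
            (⋂ x, {Q : Matrix X X ℝ | ∑ y, Q x y = 0})) ∩
            (⋂ g : X → ℝ, {Q : Matrix X X ℝ | L g ≤ Q.mulVec g}) := by
        ext Q; simp [IsRateMatrix]
      rw [e]
      refine IsClosed.inter (IsClosed.inter ?_ ?_) ?_
      · exact isClosed_iInter fun x => isClosed_iInter fun y => isClosed_iInter fun _ =>
          isClosed_le continuous_const (hent x y)
      · exact isClosed_iInter fun x =>
          isClosed_eq (continuous_finsetSum _ fun y _ => hent x y) continuous_const
      · exact isClosed_iInter fun g =>
          isClosed_le continuous_const (continuous_id.matrix_mulVec continuous_const)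
    · rintro Q ⟨-, hQ⟩ x - y -
      have a := hQ (Pi.single y 1) x
      have b := hQ (-(Pi.single y 1)) x
      simp only [Matrix.mulVec_neg, Pi.neg_apply, Matrix.mulVec_single_one, Matrix.col_apply] at a b
      exact ⟨a, by linarith⟩
end
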